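/- arXiv:2411.14538 — 2 statements merged into one kernel-verified Lean document; each statement's English description precedes it below -/
import Mathlib

section
/- The following inclusions of language families are proper: 𝓛(1PerFA₁) ⊊ 𝓛(1PerFA) ⊊ 𝓛(1RFA), and 𝓛(1PerFA₁) ⊊ 𝓛(1RFA₁) ⊊ 𝓛(1RFA). That is: every language recognized by an automaton of the smaller class is recognized by one of the larger class, and for each of the four inclusions there exists a language (over some alphabet) recognized by the larger class but not by the smaller class. -/
open scoped Classical

/-- Run a partial transition function along a word. -/
def runP {A Q : Type} (d : A → Q → Option Q) (q : Q) (w : List A) : Option Q :=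
  w.foldl (fun o a => o.bind (d a)) (some q)

/-- One-way reversible finite automaton (1RFA): a partial deterministic automaton
with a single initial state and injective transition functions. -/
structure RFA (A Q : Type) where
  start : Q
  next : A → Q → Option Q
  inj : ∀ a q q' r, next a q = some r → next a q' = some r → q = q'
  accept : Set Q

def RFA.Language {A Q : Type} (M : RFA A Q) : Set (List A) :=
  {w | ∃ qf ∈ M.accept, runP M.next M.start w = some qf}

/-- A permutation automaton (1PerFA): every transition function is a totally
defined bijection. -/
def RFA.IsPerm {A Q : Type} (M : RFA A Q) : Prop :=
  (∀ a q, (M.next a q).isSome) ∧ ∀ a r, ∃ q, M.next a q = some r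

/-- One-way reversible finite automaton with multiple initial states (MRFA). -/
structure MRFA (A Q : Type) where
  init : Set Q
  next : A → Q → Option Q
  inj : ∀ a q q' r, next a q = some r → next a q' = some r → q = q'
  accept : Set Q

def MRFA.Language {A Q : Type} (M : MRFA A Q) : Set (List A) :=
  {w | ∃ q0 ∈ M.init, ∃ qf ∈ M.accept, runP M.next q0 w = some qf}

def Rec1RFA (A : Type) (L : Set (List A)) : Prop :=
  ∃ (Q : Type) (_ : Fintype Q) (M : RFA A Q), M.Language = L

def Rec1RFA1 (A : Type) (L : Set (List A)) : Prop :=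
  ∃ (Q : Type) (_ : Fintype Q) (M : RFA A Q), M.accept.ncard = 1 ∧ M.Language = L

def Rec1PerFA (A : Type) (L : Set (List A)) : Prop :=
  ∃ (Q : Type) (_ : Fintype Q) (M : RFA A Q), M.IsPerm ∧ M.Language = L

def Rec1PerFA1 (A : Type) (L : Set (List A)) : Prop :=
  ∃ (Q : Type) (_ : Fintype Q) (M : RFA A Q),
    M.IsPerm ∧ M.accept.ncard = 1 ∧ M.Language = L

def RecMRFA (A : Type) (L : Set (List A)) : Prop :=
  ∃ (Q : Type) (_ : Fintype Q) (M : MRFA A Q), M.Language = L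

/-- Sweeping reversible automaton (sRFA), given without its accepting set:
states `Qp` move rightwards, states `Qm` move leftwards; `startT` is the
transition of the left end-marker function on the initial state, `turnL` its
restriction to `Qm`, and `turnR` is the transition function at the right
end-marker.  All transition functions are partial and injective, and the left
end-marker function is injective on the whole of `{q₀} ∪ Q₋`. -/
structure SRFA (A Qp Qm : Type) where
  start : Qp
  nextP : A → Qp → Option Qp
  nextM : A → Qm → Option Qm
  startT : Option Qp
  turnL : Qm → Option Qp
  turnR : Qp → Option Qm
  injP : ∀ a q q' r, nextP a q = some r → nextP a q' = some r → q = q'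
  injM : ∀ a q q' r, nextM a q = some r → nextM a q' = some r → q = q'
  injL : ∀ q q' r, turnL q = some r → turnL q' = some r → q = q'
  injR : ∀ q q' r, turnR q = some r → turnR q' = some r → q = q'
  startT_ne_turnL : ∀ q r, startT = some r → turnL q ≠ some r

/-- One step of a sweeping automaton on input `⊢w⊣`: a configuration is a state
together with a head position in `{0, 1, …, |w| + 1}`, where position `0` is the
left end-marker, position `i` with `1 ≤ i ≤ |w|` carries the `i`-th input
symbol, and position `|w| + 1` is the right end-marker.  The result is `none`
when the corresponding transition is undefined and the computation halts. -/
noncomputable def SRFA.step {A Qp Qm : Type} (M : SRFA A Qp Qm) (w : List A) :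
    (Qp ⊕ Qm) × ℕ → Option ((Qp ⊕ Qm) × ℕ)
  | (Sum.inl q, i) =>
      if i = 0 then
        if q = M.start then M.startT.map (fun p => (Sum.inl p, 1)) else none
      else if i = w.length + 1 then
        (M.turnR q).map (fun r => (Sum.inr r, w.length))
      else
        (w[i - 1]?.bind (fun a => M.nextP a q)).map (fun p => (Sum.inl p, i + 1))
  | (Sum.inr q, i) =>
      if i = 0 then (M.turnL q).map (fun p => (Sum.inl p, 1))
      else if i = w.length + 1 then none
      else (w[i - 1]?.bind (fun a => M.nextM a q)).map (fun r => (Sum.inr r, i - 1))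

/-- The configuration reached after `n` steps of the computation on `w`,
starting in the initial state at the left end-marker (or `none` if the
computation has halted before). -/
noncomputable def SRFA.steps {A Qp Qm : Type} (M : SRFA A Qp Qm) (w : List A) :
    ℕ → Option ((Qp ⊕ Qm) × ℕ)
  | 0 => some (Sum.inl M.start, 0)
  | n + 1 => (M.steps w n).bind (M.step w)

/-- Acceptance of an ordinary sRFA: the computation halts at the right
end-marker in an accepting state `q ∈ F ⊆ Q₊`. -/
def SRFA.AcceptsR {A Qp Qm : Type} (M : SRFA A Qp Qm) (F : Set Qp) (w : List A) : Prop :=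
  ∃ n q, M.steps w n = some (Sum.inl q, w.length + 1) ∧ q ∈ F ∧
    M.step w (Sum.inl q, w.length + 1) = none

def SRFA.LangR {A Qp Qm : Type} (M : SRFA A Qp Qm) (F : Set Qp) : Set (List A) :=
  {w | M.AcceptsR F w}

/-- Acceptance of an sRFA with acceptance at both sides: the computation halts
at either end-marker in an accepting state `c ∈ F ⊆ Q₊ ∪ Q₋`. -/
def SRFA.AcceptsB {A Qp Qm : Type} (M : SRFA A Qp Qm) (F : Set (Qp ⊕ Qm)) (w : List A) : Prop :=
  ∃ n c i, M.steps w n = some (c, i) ∧ c ∈ F ∧ (i = 0 ∨ i = w.length + 1) ∧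
    M.step w (c, i) = none

def SRFA.LangB {A Qp Qm : Type} (M : SRFA A Qp Qm) (F : Set (Qp ⊕ Qm)) : Set (List A) :=
  {w | M.AcceptsB F w}

def RecSRFA (A : Type) (L : Set (List A)) : Prop :=
  ∃ (Qp Qm : Type) (_ : Fintype Qp) (_ : Fintype Qm) (M : SRFA A Qp Qm) (F : Set Qp),
    M.LangR F = L

/-!
If an automaton has one accepting state, all words it accepts lead to the same state and hence
have the same accepted continuations; no language that contains `ε` and `a` but not `aa` has this
property. In a permutation automaton every word `w` acts as a permutation of the states, of some
finite order `n`, so the factor `wⁿ` can be inserted into any word without affecting acceptance;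
the language `{ε}` over a nonempty alphabet does not allow this.
-/

section Run

variable {A Q : Type} (d : A → Q → Option Q) (q : Q)

theorem runP_concat (w : List A) (a : A) : runP d q (w ++ [a]) = (runP d q w).bind (d a) := by
  simp only [runP, List.foldl_append, List.foldl_cons, List.foldl_nil]

theorem runP_append (u v : List A) :
    runP d q (u ++ v) = (runP d q u).bind fun r => runP d r v := by
  induction v using List.reverseRecOn with
  | nil => simp [runP]
  | append_singleton v a ih => simp only [← List.append_assoc, runP_concat, ih, Option.bind_assoc]

variable {d}

theorem runP_flatten_replicate {w : List A} {f : Q → Q}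
    (hf : ∀ q, runP d q w = some (f q)) (n : ℕ) :
    runP d q (List.replicate n w).flatten = some (f^[n] q) := by
  induction n generalizing q with
  | zero => rfl
  | succ n ih =>
    rw [List.replicate_succ, List.flatten_cons, runP_append, hf, Option.bind_some, ih,
      Function.iterate_succ_apply]

end Run

section Inclusion

variable {A : Type} {L : Set (List A)}

theorem Rec1PerFA1.rec1PerFA (h : Rec1PerFA1 A L) : Rec1PerFA A L := by
  obtain ⟨Q, hQ, M, hM, -, hL⟩ := h
  exact ⟨Q, hQ, M, hM, hL⟩

theorem Rec1PerFA1.rec1RFA1 (h : Rec1PerFA1 A L) : Rec1RFA1 A L := by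
  obtain ⟨Q, hQ, M, -, hM, hL⟩ := h
  exact ⟨Q, hQ, M, hM, hL⟩

theorem Rec1PerFA.rec1RFA (h : Rec1PerFA A L) : Rec1RFA A L := by
  obtain ⟨Q, hQ, M, -, hL⟩ := h
  exact ⟨Q, hQ, M, hL⟩

theorem Rec1RFA1.rec1RFA (h : Rec1RFA1 A L) : Rec1RFA A L := by
  obtain ⟨Q, hQ, M, -, hL⟩ := h
  exact ⟨Q, hQ, M, hL⟩

end Inclusion

section SingleAccept

variable {A Q : Type} {M : RFA A Q}

theorem RFA.mem_language_iff_of_accept_eq_singleton {f : Q} (hf : M.accept = {f}) {w : List A} :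
    w ∈ M.Language ↔ runP M.next M.start w = some f := by
  simp [RFA.Language, hf]

theorem Rec1RFA1.append_mem_iff {L : Set (List A)} (h : Rec1RFA1 A L) {u u' : List A}
    (hu : u ∈ L) (hu' : u' ∈ L) (v : List A) : u ++ v ∈ L ↔ u' ++ v ∈ L := by
  obtain ⟨Q, _, M, hM, rfl⟩ := h
  obtain ⟨f, hf⟩ := Set.ncard_eq_one.mp hM
  rw [RFA.mem_language_iff_of_accept_eq_singleton hf] at hu hu'
  simp only [RFA.mem_language_iff_of_accept_eq_singleton hf, runP_append, hu, hu']

end SingleAccept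

section Permutation

variable {A Q : Type} {M : RFA A Q}

theorem RFA.IsPerm.exists_perm_next (hM : M.IsPerm) (a : A) :
    ∃ σ : Equiv.Perm Q, ∀ q, M.next a q = some (σ q) := by
  choose f hf using fun q => Option.isSome_iff_exists.mp (hM.1 a q)
  have f_injective : Function.Injective f := fun p q hpq =>
    M.inj a p q (f q) (by rw [hf, hpq]) (hf q)
  have f_surjective : Function.Surjective f := fun r => by
    obtain ⟨q, hq⟩ := hM.2 a r
    exact ⟨q, Option.some.inj ((hf q).symm.trans hq)⟩
  exact ⟨Equiv.ofBijective f ⟨f_injective, f_surjective⟩, hf⟩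

theorem RFA.IsPerm.exists_perm_runP (hM : M.IsPerm) (w : List A) :
    ∃ σ : Equiv.Perm Q, ∀ q, runP M.next q w = some (σ q) := by
  induction w using List.reverseRecOn with
  | nil => exact ⟨1, fun _ => rfl⟩
  | append_singleton w a ih =>
    obtain ⟨σ, hσ⟩ := ih
    obtain ⟨τ, hτ⟩ := hM.exists_perm_next a
    exact ⟨τ * σ, fun q => by rw [runP_concat, hσ, Option.bind_some, hτ, Equiv.Perm.mul_apply]⟩

theorem RFA.IsPerm.exists_runP_flatten_replicate_eq_self [Finite Q] (hM : M.IsPerm)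
    (w : List A) : ∃ n ≠ 0, ∀ q, runP M.next q (List.replicate n w).flatten = some q := by
  obtain ⟨σ, hσ⟩ := hM.exists_perm_runP w
  refine ⟨orderOf σ, (orderOf_pos σ).ne', fun q => ?_⟩
  rw [runP_flatten_replicate q hσ, Equiv.Perm.iterate_eq_pow, pow_orderOf_eq_one,
    Equiv.Perm.one_apply]

theorem Rec1PerFA.exists_append_flatten_replicate_append_mem_iff {L : Set (List A)}
    (h : Rec1PerFA A L) (w : List A) :
    ∃ n ≠ 0, ∀ u v, u ++ (List.replicate n w).flatten ++ v ∈ L ↔ u ++ v ∈ L := by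
  obtain ⟨Q, _, M, hM, rfl⟩ := h
  obtain ⟨n, hn, hrun⟩ := hM.exists_runP_flatten_replicate_eq_self w
  refine ⟨n, hn, fun u v => ?_⟩
  simp only [RFA.Language, Set.mem_ofPred_eq, runP_append, hrun, Option.bind_fun_some]

end Permutation

section SingletonNil

variable (A : Type)

theorem rec1RFA1_singleton_nil : Rec1RFA1 A {[]} := by
  refine ⟨Unit, inferInstance, ⟨(), fun _ _ => none, by simp, {()}⟩, Set.ncard_singleton _, ?_⟩
  ext w
  rw [RFA.mem_language_iff_of_accept_eq_singleton rfl, Set.mem_singleton_iff]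
  cases w using List.reverseRecOn with
  | nil => simp [runP]
  | append_singleton w a => simp [runP_concat]

theorem not_rec1PerFA_singleton_nil [Nonempty A] : ¬ Rec1PerFA A {[]} := fun h => by
  obtain ⟨a⟩ := ‹Nonempty A›
  obtain ⟨n, hn, hmem⟩ := h.exists_append_flatten_replicate_append_mem_iff [a]
  have power_mem : (List.replicate n [a]).flatten ∈ ({[]} : Set (List A)) := by
    simpa using hmem [] []
  simp [hn] at power_mem

end SingletonNil

theorem runP_mul_right {A G : Type} [Monoid G] (φ : A → G) (g : G) (w : List A) :
    runP (fun a q => some (q * φ a)) g w = some (g * (w.map φ).prod) := by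
  induction w using List.reverseRecOn with
  | nil => simp [runP]
  | append_singleton w a ih => simp [runP_concat, ih, mul_assoc]

theorem rec1PerFA_map_prod_mem {A G : Type} [Group G] [Finite G] (φ : A → G) (S : Set G) :
    Rec1PerFA A {w | (w.map φ).prod ∈ S} := by
  refine ⟨G, Fintype.ofFinite G, ⟨1, fun a q => some (q * φ a), ?_, S⟩,
    ⟨fun _ _ => rfl, fun a r => ⟨r * (φ a)⁻¹, congrArg some (inv_mul_cancel_right r _)⟩⟩, ?_⟩
  · intro a q q' r h h'
    exact mul_right_cancel (Option.some.inj (h.trans h'.symm))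
  · ext w
    simp [RFA.Language, runP_mul_right]

theorem rec1PerFA_natCast_length_mem (A : Type) (n : ℕ) [NeZero n] (S : Set (ZMod n)) :
    Rec1PerFA A {w | (w.length : ZMod n) ∈ S} := by
  simpa [← ofAdd_nsmul] using rec1PerFA_map_prod_mem (A := A) (G := Multiplicative (ZMod n))
    (fun _ => Multiplicative.ofAdd 1) (Multiplicative.toAdd ⁻¹' S)

theorem not_rec1RFA1_natCast_length_ne_two (A : Type) [Nonempty A] :
    ¬ Rec1RFA1 A {w | (w.length : ZMod 3) ≠ 2} := fun h => by
  obtain ⟨a⟩ := ‹Nonempty A›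
  have nil_mem : ((0 : ℕ) : ZMod 3) ≠ 2 := by decide
  have letter_mem : ((1 : ℕ) : ZMod 3) ≠ 2 := by decide
  have square_mem := (h.append_mem_iff (u := []) (u' := [a]) nil_mem letter_mem [a]).mp letter_mem
  exact square_mem rfl

theorem stmt3_general (A : Type) [Nonempty A] :
    {L | Rec1PerFA1 A L} ⊂ {L | Rec1PerFA A L} ∧ {L | Rec1PerFA A L} ⊂ {L | Rec1RFA A L} ∧
    {L | Rec1PerFA1 A L} ⊂ {L | Rec1RFA1 A L} ∧ {L | Rec1RFA1 A L} ⊂ {L | Rec1RFA A L} := by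
  have mod_three : Rec1PerFA A {w | (w.length : ZMod 3) ≠ 2} :=
    rec1PerFA_natCast_length_mem A 3 {2}ᶜ
  have not_mod_three := not_rec1RFA1_natCast_length_ne_two A
  have nil := rec1RFA1_singleton_nil A
  have not_nil := not_rec1PerFA_singleton_nil A
  exact ⟨⟨fun _ h => h.rec1PerFA, fun h => not_mod_three (h mod_three).rec1RFA1⟩,
    ⟨fun _ h => h.rec1RFA, fun h => not_nil (h nil.rec1RFA)⟩,
    ⟨fun _ h => h.rec1RFA1, fun h => not_nil (h nil).rec1PerFA⟩,
    ⟨fun _ h => h.rec1RFA, fun h => not_mod_three (h mod_three.rec1RFA)⟩⟩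

/-- the proper inclusions
`𝓛(1PerFA₁) ⊊ 𝓛(1PerFA) ⊊ 𝓛(1RFA)` and `𝓛(1PerFA₁) ⊊ 𝓛(1RFA₁) ⊊ 𝓛(1RFA)`. -/
theorem stmt3 :
    ((∀ (A : Type) (L : Set (List A)), Rec1PerFA1 A L → Rec1PerFA A L) ∧
      ∃ (A : Type) (L : Set (List A)), Rec1PerFA A L ∧ ¬ Rec1PerFA1 A L) ∧
    ((∀ (A : Type) (L : Set (List A)), Rec1PerFA A L → Rec1RFA A L) ∧
      ∃ (A : Type) (L : Set (List A)), Rec1RFA A L ∧ ¬ Rec1PerFA A L) ∧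
    ((∀ (A : Type) (L : Set (List A)), Rec1PerFA1 A L → Rec1RFA1 A L) ∧
      ∃ (A : Type) (L : Set (List A)), Rec1RFA1 A L ∧ ¬ Rec1PerFA1 A L) ∧
    ((∀ (A : Type) (L : Set (List A)), Rec1RFA1 A L → Rec1RFA A L) ∧
      ∃ (A : Type) (L : Set (List A)), Rec1RFA A L ∧ ¬ Rec1RFA1 A L) := by
  obtain ⟨h₁, h₂, h₃, h₄⟩ := stmt3_general Unit
  exact ⟨⟨fun _ _ h => h.rec1PerFA, Unit, Set.exists_of_ssubset h₁⟩,
    ⟨fun _ _ h => h.rec1RFA, Unit, Set.exists_of_ssubset h₂⟩,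
    ⟨fun _ _ h => h.rec1RFA1, Unit, Set.exists_of_ssubset h₃⟩,
    ⟨fun _ _ h => h.rec1RFA, Unit, Set.exists_of_ssubset h₄⟩⟩
end

section
/- Every sweeping reversible automaton (sRFA) with state sets P₊ and P₋ can be transformed to a one-way reversible automaton with multiple initial states (MRFA) recognizing the same language, whose set of states is Q = { (p, f) : p ∈ P₊, f is a partial injective function from P₋ to P₊, and p ∉ Im f }. -/
open scoped Classical

/-- The state set `{(p, f) : p ∈ P₊, f a partial injective function P₋ ⇀ P₊,
p ∉ Im f}` of the MRFA constructed from a sweeping automaton. -/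
def GoodState (Pp Pm : Type) : Type :=
  {pf : Pp × (Pm → Option Pp) //
    (∀ q q' r, pf.2 q = some r → pf.2 q' = some r → q = q') ∧
    ∀ q, pf.2 q ≠ some pf.1}

/-!
On a fixed input the sweeping automaton crosses the word once from left to right and then makes
round trips from the right end-marker to the left one and back.  A leftward sweep, the turn
and a rightward sweep compose to a partial injection `f : P₋ ⇀ P₊`, which can be updated letter by
letter by composing with the transition functions on both sides.  This update is not
reversible, because the pairs of `f` that cannot be extended are forgotten.  The one-way automaton
therefore guesses, as its initial state, a restriction of the turning function at the left
end-marker, and blocks as soon as a pair would be lost: on partial functions that lose no pair the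
update is injective.  A smaller guess only yields fewer round trips, and the guess consisting of
exactly the pairs that survive the whole word yields all of them.
-/

universe u v

section PartialFunctions

variable {α : Type v} {β γ δ : Type u}

theorem kleisliRight_eq_some_iff {f : α → Option β} {g : β → Option γ} {a : α} {c : γ} :
    (f >=> g) a = some c ↔ ∃ b, f a = some b ∧ g b = some c :=
  Option.bind_eq_some_iff

/-- Injectivity of a partial function on its domain. -/
def PartialInjective (f : α → Option β) : Prop :=
  ∀ a a' b, f a = some b → f a' = some b → a = a'

theorem PartialInjective.kleisliRight {f : α → Option β} {g : β → Option γ}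
    (hf : PartialInjective f) (hg : PartialInjective g) : PartialInjective (f >=> g) := by
  intro a a' c h h'
  obtain ⟨b, hab, hbc⟩ := kleisliRight_eq_some_iff.1 h
  obtain ⟨b', hab', hbc'⟩ := kleisliRight_eq_some_iff.1 h'
  obtain rfl := hg b b' c hbc hbc'
  exact hf a a' b hab hab'

/-- Inclusion of the graphs of two partial functions. -/
def IsRestriction (f g : α → Option β) : Prop :=
  ∀ a b, f a = some b → g a = some b

theorem IsRestriction.antisymm {f g : α → Option β} (hfg : IsRestriction f g)
    (hgf : IsRestriction g f) : f = g :=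
  funext fun a => Option.ext fun b => ⟨hfg a b, hgf a b⟩

theorem IsRestriction.partialInjective {f g : α → Option β} (hfg : IsRestriction f g)
    (hg : PartialInjective g) : PartialInjective f :=
  fun a a' b h h' => hg a a' b (hfg a b h) (hfg a' b h')

theorem kleisliRight_kleisliRight_eq_some_iff {σ : α → Option β} {f : β → Option γ}
    {τ : γ → Option δ} {a : α} {d : δ} :
    (σ >=> f >=> τ) a = some d ↔ ∃ b c, σ a = some b ∧ f b = some c ∧ τ c = some d := by
  simp only [kleisliRight_eq_some_iff, exists_and_left]

theorem IsRestriction.kleisliRight {f g : β → Option γ} (hfg : IsRestriction f g)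
    (σ : α → Option β) (τ : γ → Option δ) : IsRestriction (σ >=> f >=> τ) (σ >=> g >=> τ) := by
  intro a d h
  obtain ⟨b, c, hab, hbc, hcd⟩ := kleisliRight_kleisliRight_eq_some_iff.1 h
  exact kleisliRight_kleisliRight_eq_some_iff.2 ⟨b, c, hab, hfg b c hbc, hcd⟩

/-- No pair of `f` is lost in the composition `σ >=> f >=> τ`: every pair extends along `σ` and
`τ`. -/
def Lossless (σ : α → Option β) (f : β → Option γ) (τ : γ → Option δ) : Prop :=
  ∀ b c, f b = some c → ∃ a d, σ a = some b ∧ τ c = some d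

theorem Lossless.isRestriction {σ : α → Option β} {f g : β → Option γ} {τ : γ → Option δ}
    (hf : Lossless σ f τ) (hτ : PartialInjective τ) (hfg : σ >=> f >=> τ = σ >=> g >=> τ) :
    IsRestriction f g := by
  intro b c hbc
  obtain ⟨a, d, hab, hcd⟩ := hf b c hbc
  have hg : (σ >=> g >=> τ) a = some d :=
    hfg ▸ kleisliRight_kleisliRight_eq_some_iff.2 ⟨b, c, hab, hbc, hcd⟩
  obtain ⟨b', c', hab', hbc', hcd'⟩ := kleisliRight_kleisliRight_eq_some_iff.1 hg
  obtain rfl := Option.some.inj (hab.symm.trans hab')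
  obtain rfl := hτ c c' d hcd hcd'
  exact hbc'

theorem Lossless.eq_of_kleisliRight_eq {σ : α → Option β} {f g : β → Option γ}
    {τ : γ → Option δ} (hf : Lossless σ f τ) (hg : Lossless σ g τ) (hτ : PartialInjective τ)
    (hfg : σ >=> f >=> τ = σ >=> g >=> τ) : f = g :=
  (hf.isRestriction hτ hfg).antisymm (hg.isRestriction hτ hfg.symm)

theorem lossless_pure (f : β → Option γ) : Lossless pure f pure :=
  fun b c _ => ⟨b, c, rfl, rfl⟩

theorem lossless_kleisliRight_iff {α' δ' : Type u} {σ' : α → Option α'} {σ : α' → Option β}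
    {f : β → Option γ} {τ : γ → Option δ} {τ' : δ → Option δ'} (hσ : PartialInjective σ) :
    Lossless (σ' >=> σ) f (τ >=> τ') ↔
      Lossless σ f τ ∧ Lossless σ' (σ >=> f >=> τ) τ' := by
  simp only [Lossless, kleisliRight_eq_some_iff (f := σ'), kleisliRight_eq_some_iff (g := τ'),
    kleisliRight_kleisliRight_eq_some_iff]
  constructor
  · intro hf
    refine ⟨fun b c hbc => ?_, ?_⟩
    · obtain ⟨-, -, ⟨a, -, hab⟩, d, hcd, -⟩ := hf b c hbc
      exact ⟨a, d, hab, hcd⟩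
    · rintro a d ⟨b, c, hab, hbc, hcd⟩
      obtain ⟨x, y, ⟨a', hxa', hab'⟩, d', hcd', hdy'⟩ := hf b c hbc
      obtain rfl := hσ a a' b hab hab'
      obtain rfl := Option.some.inj (hcd.symm.trans hcd')
      exact ⟨x, y, hxa', hdy'⟩
  · rintro ⟨hf, hf'⟩ b c hbc
    obtain ⟨a, d, hab, hcd⟩ := hf b c hbc
    obtain ⟨x, y, hxa, hdy⟩ := hf' a d ⟨b, c, hab, hbc, hcd⟩
    exact ⟨x, y, ⟨a, hxa, hab⟩, d, hcd, hdy⟩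

/-- The largest restriction of `f` none of whose pairs is lost in `σ >=> f >=> τ`. -/
noncomputable def losslessPart (σ : α → Option β) (f : β → Option γ) (τ : γ → Option δ) :
    β → Option γ :=
  fun b => (f b).filter fun c => ∃ a d, σ a = some b ∧ τ c = some d

theorem losslessPart_eq_some_iff {σ : α → Option β} {f : β → Option γ} {τ : γ → Option δ}
    {b : β} {c : γ} :
    losslessPart σ f τ b = some c ↔ f b = some c ∧ ∃ a d, σ a = some b ∧ τ c = some d := by
  simp only [losslessPart, Option.filter_eq_some_iff, decide_eq_true_eq]

theorem losslessPart_isRestriction (σ : α → Option β) (f : β → Option γ) (τ : γ → Option δ) :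
    IsRestriction (losslessPart σ f τ) f :=
  fun _ _ h => (losslessPart_eq_some_iff.1 h).1

theorem lossless_losslessPart (σ : α → Option β) (f : β → Option γ) (τ : γ → Option δ) :
    Lossless σ (losslessPart σ f τ) τ :=
  fun _ _ h => (losslessPart_eq_some_iff.1 h).2

theorem kleisliRight_losslessPart (σ : α → Option β) (f : β → Option γ) (τ : γ → Option δ) :
    σ >=> losslessPart σ f τ >=> τ = σ >=> f >=> τ := by
  refine ((losslessPart_isRestriction σ f τ).kleisliRight σ τ).antisymm fun a d h => ?_
  obtain ⟨b, c, hab, hbc, hcd⟩ := kleisliRight_kleisliRight_eq_some_iff.1 h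
  exact kleisliRight_kleisliRight_eq_some_iff.2
    ⟨b, c, hab, losslessPart_eq_some_iff.2 ⟨hbc, a, d, hab, hcd⟩, hcd⟩

end PartialFunctions

section RunMap

variable {A Q : Type} (d : A → Q → Option Q)

/-- The partial transition function of a word: `runP` with the state as last argument, so that
concatenation of words becomes Kleisli composition. -/
def runMap (w : List A) (q : Q) : Option Q :=
  runP d q w

theorem runMap_singleton (a : A) : runMap d [a] = d a := rfl

theorem foldl_bind_eq_bind_runMap (w : List A) (o : Option Q) :
    w.foldl (fun o a => o.bind (d a)) o = o.bind (runMap d w) := by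
  cases o with
  | none => induction w with
    | nil => rfl
    | cons _ _ ih => exact ih
  | some q => rfl

theorem runMap_append (u w : List A) : runMap d (u ++ w) = runMap d u >=> runMap d w :=
  funext fun _ => List.foldl_append.trans (foldl_bind_eq_bind_runMap d w _)

theorem runMap_cons (a : A) (w : List A) : runMap d (a :: w) = d a >=> runMap d w :=
  runMap_append d [a] w

theorem PartialInjective.runMap {d : A → Q → Option Q} (hd : ∀ a, PartialInjective (d a))
    (w : List A) : PartialInjective (runMap d w) := by
  induction w with
  | nil => exact fun q q' r h h' => Option.some.inj (h.trans h'.symm)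
  | cons a w ih => exact runMap_cons d a w ▸ (hd a).kleisliRight ih

theorem MRFA.mem_language_iff {A Q : Type} {N : MRFA A Q} {w : List A} :
    w ∈ N.Language ↔ ∃ s ∈ N.init, ∃ t ∈ N.accept, runMap N.next w s = some t :=
  Iff.rfl

end RunMap

namespace GoodState

variable {Pp Pm Pp' Pm' : Type}

/-- The component `p` of a state `(p, f)`. -/
def first (s : GoodState Pp Pm) : Pp :=
  s.1.1

/-- The component `f` of a state `(p, f)`. -/
def trips (s : GoodState Pp Pm) : Pm → Option Pp :=
  s.1.2

/-- The state `(p, f)`. -/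
def mk (p : Pp) (f : Pm → Option Pp) (hf : PartialInjective f) (hp : ∀ q, f q ≠ some p) :
    GoodState Pp Pm :=
  ⟨(p, f), hf, hp⟩

theorem first_mk (p : Pp) (f : Pm → Option Pp) (hf : PartialInjective f)
    (hp : ∀ q, f q ≠ some p) : (mk p f hf hp).first = p := rfl

theorem trips_mk (p : Pp) (f : Pm → Option Pp) (hf : PartialInjective f)
    (hp : ∀ q, f q ≠ some p) : (mk p f hf hp).trips = f := rfl

theorem ext_iff {s t : GoodState Pp Pm} : s = t ↔ s.first = t.first ∧ s.trips = t.trips :=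
  Subtype.ext_iff.trans Prod.ext_iff

theorem trips_partialInjective (s : GoodState Pp Pm) : PartialInjective s.trips :=
  s.2.1

theorem trips_ne_first (s : GoodState Pp Pm) (q : Pm) : s.trips q ≠ some s.first :=
  s.2.2 q

/-- The image of a state `(p, f)` under partial injections `σ` and `τ`, namely
`(τ p, σ >=> f >=> τ)`; undefined if `τ p` is undefined or some pair of `f` would be lost. -/
noncomputable def push {σ : Pm' → Option Pm} {τ : Pp → Option Pp'} (hσ : PartialInjective σ)
    (hτ : PartialInjective τ) (s : GoodState Pp Pm) : Option (GoodState Pp' Pm') :=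
  if h : (τ s.first).isSome ∧ Lossless σ s.trips τ then
    some (mk ((τ s.first).get h.1) (σ >=> s.trips >=> τ)
      (hσ.kleisliRight (s.trips_partialInjective.kleisliRight hτ)) (by
        intro q hq
        obtain ⟨x, y, -, hxy, hy⟩ := kleisliRight_kleisliRight_eq_some_iff.1 hq
        obtain rfl := hτ y s.first _ hy (Option.some_get h.1).symm
        exact s.trips_ne_first x hxy))
  else none

variable {σ : Pm' → Option Pm} {τ : Pp → Option Pp'} {hσ : PartialInjective σ}
  {hτ : PartialInjective τ}

theorem push_eq_some_iff {s : GoodState Pp Pm} {t : GoodState Pp' Pm'} :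
    push hσ hτ s = some t ↔
      τ s.first = some t.first ∧ Lossless σ s.trips τ ∧ σ >=> s.trips >=> τ = t.trips := by
  unfold push
  split_ifs with h
  · rw [Option.some_inj, ext_iff, first_mk, trips_mk, Option.eq_some_iff_get_eq,
      exists_prop_of_true h.1, and_iff_right h.2]
  · exact iff_of_false nofun fun ⟨hp, hf, _⟩ => h ⟨Option.isSome_of_eq_some hp, hf⟩

theorem exists_push_eq_some {s : GoodState Pp Pm} {p : Pp'} (hp : τ s.first = some p)
    (hf : Lossless σ s.trips τ) : ∃ t, push hσ hτ s = some t :=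
  ⟨_, dif_pos ⟨Option.isSome_of_eq_some hp, hf⟩⟩

theorem push_partialInjective : PartialInjective (push (Pp := Pp) hσ hτ) := by
  intro s s' t h h'
  obtain ⟨hp, hf, hst⟩ := push_eq_some_iff.1 h
  obtain ⟨hp', hf', hst'⟩ := push_eq_some_iff.1 h'
  exact ext_iff.2
    ⟨hτ _ _ _ hp hp', hf.eq_of_kleisliRight_eq hf' hτ (hst.trans hst'.symm)⟩

theorem push_pure (h : PartialInjective (pure : Pm → Option Pm))
    (h' : PartialInjective (pure : Pp → Option Pp)) : push h h' = pure := by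
  funext s
  exact push_eq_some_iff.2 ⟨rfl, lossless_pure _, by rw [fish_pure, fish_pipe]⟩

theorem push_kleisliRight {Pp'' Pm'' : Type} {σ' : Pm'' → Option Pm'} {τ' : Pp' → Option Pp''}
    (hσ : PartialInjective σ) (hτ : PartialInjective τ) (hσ' : PartialInjective σ')
    (hτ' : PartialInjective τ') :
    push (hσ'.kleisliRight hσ) (hτ.kleisliRight hτ') = push hσ hτ >=> push hσ' hτ' := by
  funext s
  ext u
  rw [push_eq_some_iff, lossless_kleisliRight_iff hσ, kleisliRight_eq_some_iff,
    kleisliRight_eq_some_iff]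
  constructor
  · rintro ⟨⟨p, hp, hpu⟩, ⟨hf, hf'⟩, hu⟩
    obtain ⟨t, hst⟩ := exists_push_eq_some (hσ := hσ) (hτ := hτ) hp hf
    refine ⟨t, hst, push_eq_some_iff.2 ?_⟩
    obtain ⟨hpt, -, ht⟩ := push_eq_some_iff.1 hst
    obtain rfl := Option.some.inj (hp.symm.trans hpt)
    rw [← ht, ← hu]
    exact ⟨hpu, hf', by simp only [fish_assoc]⟩
  · rintro ⟨t, hst, htu⟩
    obtain ⟨hp, hf, ht⟩ := push_eq_some_iff.1 hst
    obtain ⟨hp', hf', hu⟩ := push_eq_some_iff.1 htu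
    rw [← ht] at hf' hu
    exact ⟨⟨_, hp, hp'⟩, ⟨hf, hf'⟩, by simpa only [fish_assoc] using hu⟩

end GoodState

namespace SRFA

variable {A Pp Pm : Type} (M : SRFA A Pp Pm)

/-- The sweep over `w` from left to right. -/
def sweepRight (w : List A) : Pp → Option Pp :=
  runMap M.nextP w

/-- The sweep over `w` from right to left. -/
def sweepLeft (w : List A) : Pm → Option Pm :=
  runMap M.nextM w.reverse

theorem sweepRight_cons (a : A) (w : List A) :
    M.sweepRight (a :: w) = M.nextP a >=> M.sweepRight w :=
  runMap_cons M.nextP a w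

theorem sweepLeft_cons (a : A) (w : List A) :
    M.sweepLeft (a :: w) = M.sweepLeft w >=> M.nextM a := by
  rw [sweepLeft, List.reverse_cons, runMap_append, runMap_singleton, sweepLeft]

theorem sweepRight_take_succ {w : List A} {i : ℕ} (hi : i < w.length) :
    M.sweepRight (w.take (i + 1)) = M.sweepRight (w.take i) >=> M.nextP w[i] := by
  rw [List.take_succ_eq_append_getElem hi, sweepRight, runMap_append, runMap_singleton, sweepRight]

theorem sweepLeft_drop {w : List A} {i : ℕ} (hi : i < w.length) :
    M.sweepLeft (w.drop i) = M.sweepLeft (w.drop (i + 1)) >=> M.nextM w[i] := by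
  rw [List.drop_eq_getElem_cons hi, sweepLeft_cons]

theorem sweepRight_partialInjective (w : List A) : PartialInjective (M.sweepRight w) :=
  .runMap M.injP w

theorem sweepLeft_partialInjective (w : List A) : PartialInjective (M.sweepLeft w) :=
  .runMap M.injM w.reverse

/-- The round trip from the right end-marker of `w` to the left one and back. -/
def roundTrip (w : List A) : Pm → Option Pp :=
  M.sweepLeft w >=> M.turnL >=> M.sweepRight w

/-- The states in which the automaton is at the right end-marker, if it first arrives there in
state `p` and its round trips from the right end-marker are given by `f`. -/
def Arrives (p : Pp) (f : Pm → Option Pp) : Pp → Prop :=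
  Relation.ReflTransGen (fun x y => (M.turnR >=> f) x = some y) p

variable {M} in
theorem Arrives.mono {p z : Pp} {f g : Pm → Option Pp} (hfg : IsRestriction f g)
    (h : M.Arrives p f z) : M.Arrives p g z := by
  refine Relation.ReflTransGen.mono (fun x y hxy => ?_) _ _ h
  obtain ⟨q, hxq, hqy⟩ := kleisliRight_eq_some_iff.1 hxy
  exact kleisliRight_eq_some_iff.2 ⟨q, hxq, hfg q y hqy⟩

/-- The states in which the automaton arrives at the right end-marker on the input `w`. -/
def AtRight (w : List A) (z : Pp) : Prop :=
  ∃ y p, M.startT = some y ∧ M.sweepRight w y = some p ∧ M.Arrives p (M.roundTrip w) z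

/-- The states in which the automaton leaves the left end-marker on the input `w`. -/
def LeavesLeft (w : List A) (y : Pp) : Prop :=
  M.startT = some y ∨
    ∃ z, M.AtRight w z ∧ (M.turnR >=> M.sweepLeft w >=> M.turnL) z = some y

/-- Reachability between configurations on the input `w`. -/
def Reaches (w : List A) : (Pp ⊕ Pm) × ℕ → (Pp ⊕ Pm) × ℕ → Prop :=
  Relation.ReflTransGen fun c c' => M.step w c = some c'

/-- The configurations visited on the input `w`, described by the last end-marker state and the
sweep since then. -/
def Visited (w : List A) : (Pp ⊕ Pm) × ℕ → Prop
  | (Sum.inl p, 0) => p = M.start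
  | (Sum.inl p, i + 1) => i ≤ w.length ∧
      ∃ y, M.LeavesLeft w y ∧ M.sweepRight (w.take i) y = some p
  | (Sum.inr q, i) => i ≤ w.length ∧
      ∃ z, M.AtRight w z ∧ (M.turnR >=> M.sweepLeft (w.drop i)) z = some q

theorem exists_steps_eq_some_iff {w : List A} {c : (Pp ⊕ Pm) × ℕ} :
    (∃ n, M.steps w n = some c) ↔ M.Reaches w (Sum.inl M.start, 0) c := by
  constructor
  · rintro ⟨n, hn⟩
    induction n generalizing c with
    | zero => exact Option.some.inj hn ▸ .refl
    | succ n ih =>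
      obtain ⟨b, hb, hbc⟩ := Option.bind_eq_some_iff.1 hn
      exact (ih hb).tail hbc
  · intro h
    induction h with
    | refl => exact ⟨0, rfl⟩
    | tail _ hbc ih =>
      obtain ⟨n, hn⟩ := ih
      exact ⟨n + 1, Option.bind_eq_some_iff.2 ⟨_, hn, hbc⟩⟩

theorem step_start (w : List A) :
    M.step w (Sum.inl M.start, 0) = M.startT.map fun p => (Sum.inl p, 1) := by
  simp [step]

theorem step_inr_zero (w : List A) (q : Pm) :
    M.step w (Sum.inr q, 0) = (M.turnL q).map fun p => (Sum.inl p, 1) := by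
  simp [step]

theorem step_inl_length_add_one (w : List A) (p : Pp) :
    M.step w (Sum.inl p, w.length + 1) = (M.turnR p).map fun q => (Sum.inr q, w.length) := by
  simp [step]

theorem step_inl_add_one {w : List A} {i : ℕ} (hi : i < w.length) (p : Pp) :
    M.step w (Sum.inl p, i + 1) = (M.nextP w[i] p).map fun p' => (Sum.inl p', i + 2) := by
  simp [step, hi, hi.ne]

theorem step_inr_add_one {w : List A} {i : ℕ} (hi : i < w.length) (q : Pm) :
    M.step w (Sum.inr q, i + 1) = (M.nextM w[i] q).map fun q' => (Sum.inr q', i) := by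
  simp [step, hi, hi.ne]

variable {M}

theorem reaches_of_sweepRight_take {w : List A} {i : ℕ} (hi : i ≤ w.length) {y p : Pp}
    (h : M.sweepRight (w.take i) y = some p) :
    M.Reaches w (Sum.inl y, 1) (Sum.inl p, i + 1) := by
  induction i generalizing p with
  | zero => exact Option.some.inj h ▸ .refl
  | succ i ih =>
    rw [M.sweepRight_take_succ hi, kleisliRight_eq_some_iff] at h
    obtain ⟨x, hyx, hxp⟩ := h
    exact (ih (Nat.le_of_succ_le hi) hyx).tail (by rw [M.step_inl_add_one hi, hxp, Option.map_some])

theorem reaches_of_sweepLeft_drop {w : List A} {i : ℕ} (hi : i ≤ w.length) {r q : Pm}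
    (h : M.sweepLeft (w.drop i) r = some q) :
    M.Reaches w (Sum.inr r, w.length) (Sum.inr q, i) := by
  induction hi using Nat.decreasingInduction generalizing q with
  | self =>
    rw [List.drop_length] at h
    exact Option.some.inj h ▸ .refl
  | of_succ i hi ih =>
    rw [M.sweepLeft_drop hi, kleisliRight_eq_some_iff] at h
    obtain ⟨x, hrx, hxq⟩ := h
    exact (ih hrx).tail (by rw [M.step_inr_add_one hi, hxq, Option.map_some])

theorem reaches_of_sweepRight {w : List A} {y p : Pp} (h : M.sweepRight w y = some p) :
    M.Reaches w (Sum.inl y, 1) (Sum.inl p, w.length + 1) :=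
  reaches_of_sweepRight_take le_rfl (by rwa [List.take_length])

theorem reaches_of_roundTrip {w : List A} {p p' : Pp}
    (h : (M.turnR >=> M.roundTrip w) p = some p') :
    M.Reaches w (Sum.inl p, w.length + 1) (Sum.inl p', w.length + 1) := by
  obtain ⟨q, hpq, hqp'⟩ := kleisliRight_eq_some_iff.1 h
  obtain ⟨x, y, hqx, hxy, hyp'⟩ := kleisliRight_kleisliRight_eq_some_iff.1 hqp'
  have leftward : M.Reaches w (Sum.inl p, w.length + 1) (Sum.inr x, 0) :=
    (reaches_of_sweepLeft_drop (Nat.zero_le _) hqx).head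
      (by rw [step_inl_length_add_one, hpq, Option.map_some])
  have turn : M.step w (Sum.inr x, 0) = some (Sum.inl y, 1) := by
    rw [step_inr_zero, hxy, Option.map_some]
  exact (leftward.tail turn).trans (reaches_of_sweepRight hyp')

theorem AtRight.reaches {w : List A} {z : Pp} (h : M.AtRight w z) :
    M.Reaches w (Sum.inl M.start, 0) (Sum.inl z, w.length + 1) := by
  obtain ⟨y, p, hy, hyp, hpz⟩ := h
  induction hpz with
  | refl => exact (reaches_of_sweepRight hyp).head (by rw [step_start, hy, Option.map_some])
  | tail _ hxz ih => exact ih.trans (reaches_of_roundTrip hxz)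

theorem LeavesLeft.atRight {w : List A} {y z : Pp} (h : M.LeavesLeft w y)
    (hz : M.sweepRight w y = some z) : M.AtRight w z := by
  rcases h with hy | ⟨x, ⟨y', p, hy', hp, hx⟩, hxy⟩
  · exact ⟨y, z, hy, hz, .refl⟩
  · have hxz : (M.turnR >=> M.roundTrip w) x = some z := by
      simp only [roundTrip, ← fish_assoc] at hxy ⊢
      exact kleisliRight_eq_some_iff.2 ⟨y, hxy, hz⟩
    exact ⟨y', p, hy', hp, hx.tail hxz⟩

theorem LeavesLeft.visited {w : List A} {y : Pp} (h : M.LeavesLeft w y) :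
    M.Visited w (Sum.inl y, 1) :=
  ⟨Nat.zero_le _, y, h, rfl⟩

theorem Visited.atRight {w : List A} {z : Pp} (h : M.Visited w (Sum.inl z, w.length + 1)) :
    M.AtRight w z := by
  obtain ⟨-, y, hy, hyz⟩ := h
  rw [List.take_length] at hyz
  exact hy.atRight hyz

theorem Visited.step_inl {w : List A} {p : Pp} {i : ℕ} {c : (Pp ⊕ Pm) × ℕ}
    (h : M.Visited w (Sum.inl p, i)) (hc : M.step w (Sum.inl p, i) = some c) :
    M.Visited w c := by
  cases i with
  | zero =>
    obtain rfl : p = M.start := h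
    rw [step_start, Option.map_eq_some_iff] at hc
    obtain ⟨y, hy, rfl⟩ := hc
    exact LeavesLeft.visited (.inl hy)
  | succ i =>
    obtain ⟨hi, y, hy, hyp⟩ := h
    rcases hi.eq_or_lt with rfl | hi
    · rw [step_inl_length_add_one, Option.map_eq_some_iff] at hc
      obtain ⟨q, hpq, rfl⟩ := hc
      rw [List.take_length] at hyp
      refine ⟨le_rfl, p, hy.atRight hyp, ?_⟩
      rw [List.drop_length]
      exact kleisliRight_eq_some_iff.2 ⟨q, hpq, rfl⟩
    · rw [step_inl_add_one M hi, Option.map_eq_some_iff] at hc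
      obtain ⟨p', hpp', rfl⟩ := hc
      refine ⟨hi, y, hy, ?_⟩
      rw [sweepRight_take_succ M hi]
      exact kleisliRight_eq_some_iff.2 ⟨p, hyp, hpp'⟩

theorem Visited.step_inr {w : List A} {q : Pm} {i : ℕ} {c : (Pp ⊕ Pm) × ℕ}
    (h : M.Visited w (Sum.inr q, i)) (hc : M.step w (Sum.inr q, i) = some c) :
    M.Visited w c := by
  obtain ⟨hi, z, hz, hzq⟩ := h
  cases i with
  | zero =>
    rw [step_inr_zero, Option.map_eq_some_iff] at hc
    obtain ⟨y, hqy, rfl⟩ := hc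
    refine LeavesLeft.visited (.inr ⟨z, hz, ?_⟩)
    rw [← fish_assoc]
    exact kleisliRight_eq_some_iff.2 ⟨q, hzq, hqy⟩
  | succ i =>
    rw [step_inr_add_one M hi, Option.map_eq_some_iff] at hc
    obtain ⟨q', hqq', rfl⟩ := hc
    refine ⟨Nat.le_of_succ_le hi, z, hz, ?_⟩
    rw [sweepLeft_drop M hi, ← fish_assoc]
    exact kleisliRight_eq_some_iff.2 ⟨q, hzq, hqq'⟩

theorem Reaches.visited {w : List A} {c : (Pp ⊕ Pm) × ℕ}
    (h : M.Reaches w (Sum.inl M.start, 0) c) : M.Visited w c := by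
  induction h with
  | refl => exact (rfl : M.start = M.start)
  | @tail b _ _ hbc ih =>
    rcases b with ⟨p | q, i⟩
    · exact ih.step_inl hbc
    · exact ih.step_inr hbc

theorem acceptsR_iff {F : Set Pp} {w : List A} :
    M.AcceptsR F w ↔ ∃ z ∈ F, M.turnR z = none ∧ M.AtRight w z := by
  have atRight_iff : ∀ z,
      (∃ n, M.steps w n = some (Sum.inl z, w.length + 1)) ↔ M.AtRight w z := fun z =>
    M.exists_steps_eq_some_iff.trans ⟨fun h => h.visited.atRight, AtRight.reaches⟩
  simp only [AcceptsR, ← atRight_iff, step_inl_length_add_one, Option.map_eq_none_iff]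
  constructor
  · rintro ⟨n, z, hn, hzF, hz⟩
    exact ⟨z, hzF, hz, n, hn⟩
  · rintro ⟨z, hzF, hz, n, hn⟩
    exact ⟨n, z, hn, hzF, hz⟩

variable (M)

/-- The one-way automaton simulating a sweeping automaton.  In a state `(p, f)`, `p` is the state
of the first crossing of the current position, and `f` is a guessed part of the round trips on the
prefix read so far. -/
noncomputable def toMRFA (F : Set Pp) : MRFA A (GoodState Pp Pm) where
  init := {s | M.startT = some s.first ∧ IsRestriction s.trips M.turnL}
  next a := GoodState.push (M.injM a) (M.injP a)
  inj _ := GoodState.push_partialInjective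
  accept := {t | ∃ z ∈ F, M.turnR z = none ∧ M.Arrives t.first t.trips z}

theorem runMap_toMRFA_next (F : Set Pp) (w : List A) :
    runMap (M.toMRFA F).next w =
      GoodState.push (M.sweepLeft_partialInjective w) (M.sweepRight_partialInjective w) := by
  induction w with
  | nil => exact (GoodState.push_pure _ _).symm
  | cons a w ih =>
    rw [runMap_cons, ih]
    convert (GoodState.push_kleisliRight (M.injM a) (M.injP a) (M.sweepLeft_partialInjective w)
      (M.sweepRight_partialInjective w)).symm using 2
    · rfl
    · exact M.sweepLeft_cons a w
    · exact M.sweepRight_cons a w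

variable {M}

theorem exists_mem_init_trips_eq_roundTrip (F : Set Pp) {w : List A} {y p : Pp}
    (hy : M.startT = some y) (hyp : M.sweepRight w y = some p) :
    ∃ s ∈ (M.toMRFA F).init, ∃ t, runMap (M.toMRFA F).next w s = some t ∧
      t.first = p ∧ t.trips = M.roundTrip w := by
  let f := losslessPart (M.sweepLeft w) M.turnL (M.sweepRight w)
  have hf : IsRestriction f M.turnL := losslessPart_isRestriction _ _ _
  let s : GoodState Pp Pm := .mk y f (hf.partialInjective M.injL)
    fun q hq => M.startT_ne_turnL q y hy (hf q y hq)
  rw [runMap_toMRFA_next]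
  obtain ⟨t, hst⟩ := GoodState.exists_push_eq_some (s := s) hyp (lossless_losslessPart _ _ _)
  obtain ⟨hpt, -, ht⟩ := GoodState.push_eq_some_iff.1 hst
  exact ⟨s, ⟨hy, hf⟩, t, hst, Option.some.inj (hpt.symm.trans hyp),
    ht.symm.trans (kleisliRight_losslessPart _ _ _)⟩

variable (M)

theorem language_toMRFA (F : Set Pp) : (M.toMRFA F).Language = M.LangR F := by
  ext w
  rw [MRFA.mem_language_iff]
  refine Iff.trans ⟨?_, ?_⟩ acceptsR_iff.symm
  · rintro ⟨s, ⟨hs, hsf⟩, t, ⟨z, hzF, hz, htz⟩, hst⟩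
    rw [runMap_toMRFA_next] at hst
    obtain ⟨hp, -, ht⟩ := GoodState.push_eq_some_iff.1 hst
    have ht_restr : IsRestriction t.trips (M.roundTrip w) := ht ▸ hsf.kleisliRight _ _
    exact ⟨z, hzF, hz, s.first, t.first, hs, hp, htz.mono ht_restr⟩
  · rintro ⟨z, hzF, hz, y, p, hy, hyp, hpz⟩
    obtain ⟨s, hs, t, hst, rfl, ht⟩ := exists_mem_init_trips_eq_roundTrip F hy hyp
    exact ⟨s, hs, t, ⟨z, hzF, hz, ht ▸ hpz⟩, hst⟩

end SRFA

theorem stmt10_general (A Pp Pm : Type) (M : SRFA A Pp Pm) (F : Set Pp) :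
    ∃ N : MRFA A (GoodState Pp Pm), N.Language = M.LangR F :=
  ⟨M.toMRFA F, M.language_toMRFA F⟩

/-- every sRFA with state sets `P₊`, `P₋` can be transformed to an
MRFA with the set of states `{(p, f) : p ∈ P₊, f : P₋ ⇀ P₊ partial injective,
p ∉ Im f}` recognizing the same language. -/
theorem stmt10 (A Pp Pm : Type) [Fintype Pp] [Fintype Pm]
    (M : SRFA A Pp Pm) (F : Set Pp) :
    ∃ N : MRFA A (GoodState Pp Pm), N.Language = M.LangR F :=
  stmt10_general A Pp Pm M F
end
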